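/- For every T > 0 and every ε ∈ (0, 3/8) there exists a constant C = C(T,ε) > 0, independent of n and m, such that for all integers n ≥ 2 and m ≥ 1, with τ = T/m and t_i = iτ, for all x ∈ (0,π) and all i ∈ {1,…,m}: ∫₀^{t_i} ∫₀^π |G^{n,τ}_{s+τ}(x,y) - G^n_s(x,y)|² dy ds ≤ C τ^{3/4 - ε}, and ∫₀^{t_i} ∫₀^π |Δ_nG^{n,τ}_{s+τ}(x,y) - Δ_nG^n_s(x,y)| dy ds ≤ C τ^{3/8 - ε}. -/

import Mathlib

noncomputable section

open Real intervalIntegral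

/-- The Dirichlet eigenfunctions `φ_j(x) = √(2/π) sin(jx)` on `(0,π)`. -/
def phiF (j : ℕ) (x : ℝ) : ℝ := Real.sqrt (2 / Real.pi) * Real.sin (j * x)

/-- The Green function of `∂_t + Δ²` with Dirichlet boundary conditions on `(0,π)`:
`G_t(x,y) = Σ_{j≥1} e^{-j⁴ t} φ_j(x) φ_j(y)`. -/
def GF (t x y : ℝ) : ℝ :=
  ∑' j : ℕ, Real.exp (-((j : ℝ) + 1) ^ 4 * t) * phiF (j + 1) x * phiF (j + 1) y

/-- `ΔG_t(x,y) = -Σ_{j≥1} j² e^{-j⁴ t} φ_j(x) φ_j(y)`. -/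
def DGF (t x y : ℝ) : ℝ :=
  -∑' j : ℕ, ((j : ℝ) + 1) ^ 2 * Real.exp (-((j : ℝ) + 1) ^ 4 * t) * phiF (j + 1) x * phiF (j + 1) y

/-- The grid projection `κ_n(y) = h⌊y/h⌋` with `h = π/n`. -/
def kap (n : ℕ) (y : ℝ) : ℝ := (Real.pi / n) * ⌊y / (Real.pi / n)⌋

/-- The eigenvalue `λ_{j,n} = -(4n²/π²) sin²(jπ/(2n))` of the discrete Dirichlet Laplacian. -/
def lamEig (j n : ℕ) : ℝ :=
  -(4 * (n : ℝ) ^ 2 / Real.pi ^ 2) * Real.sin ((j : ℝ) * Real.pi / (2 * n)) ^ 2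

/-- The piecewise-linear interpolant `φ_{j,n}` of `φ_j` on the grid `{0, h, …, π}`. -/
def phiIn (n j : ℕ) (x : ℝ) : ℝ :=
  phiF j (kap n x)
    + ((n : ℝ) / Real.pi) * (x - kap n x) * (phiF j (kap n x + Real.pi / n) - phiF j (kap n x))

/-- The spatially discrete Green function
`G^n_t(x,y) = Σ_{j=1}^{n-1} e^{-λ_{j,n}² t} φ_{j,n}(x) φ_j(κ_n(y))`. -/
def Gn (n : ℕ) (t x y : ℝ) : ℝ :=
  ∑ j ∈ Finset.range (n - 1),
    Real.exp (-(lamEig (j + 1) n) ^ 2 * t) * phiIn n (j + 1) x * phiF (j + 1) (kap n y)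

/-- `Δ_nG^n_t(x,y) = Σ_{j=1}^{n-1} λ_{j,n} e^{-λ_{j,n}² t} φ_{j,n}(x) φ_j(κ_n(y))`. -/
def DGn (n : ℕ) (t x y : ℝ) : ℝ :=
  ∑ j ∈ Finset.range (n - 1),
    lamEig (j + 1) n * Real.exp (-(lamEig (j + 1) n) ^ 2 * t)
      * phiIn n (j + 1) x * phiF (j + 1) (kap n y)

/-- The fully discrete Green function
`G^{n,τ}_t(x,y) = Σ_{j=1}^{n-1} (1 + τλ_{j,n}²)^{-⌊t/τ⌋} φ_{j,n}(x) φ_j(κ_n(y))`. -/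
def Gnt (n : ℕ) (τ t x y : ℝ) : ℝ :=
  ∑ j ∈ Finset.range (n - 1),
    ((1 + τ * (lamEig (j + 1) n) ^ 2) ^ (⌊t / τ⌋₊))⁻¹ * phiIn n (j + 1) x * phiF (j + 1) (kap n y)

/-- `Δ_nG^{n,τ}_t(x,y) = Σ_{j=1}^{n-1} λ_{j,n} (1 + τλ_{j,n}²)^{-⌊t/τ⌋} φ_{j,n}(x) φ_j(κ_n(y))`. -/
def DGnt (n : ℕ) (τ t x y : ℝ) : ℝ :=
  ∑ j ∈ Finset.range (n - 1),
    lamEig (j + 1) n * ((1 + τ * (lamEig (j + 1) n) ^ 2) ^ (⌊t / τ⌋₊))⁻¹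
      * phiIn n (j + 1) x * phiF (j + 1) (kap n y)

/-! The fully discrete and the semi-discrete kernels differ by the spectral multiplier
`d_j = (1 + τμ_j)^{-(⌊s/τ⌋+1)} - e^{-μ_j s}` with `μ_j = λ_{j,n}²`. Discrete orthogonality of the
sines on the grid bounds the `L²(dy)` norm of the kernel by the `ℓ²` norm of `d`, and Cauchy-Schwarz
handles the `L¹(dy)` norm. The backward Euler error satisfies `|d_j| ≤ 1`, `|d_j| ≤ 4τ/s` and
`|d_j| ≤ 1/(μ_j s)`; interpolating between the three gives `d_j² ≲ τ^a s^{-(a+b)} μ_j^{-b}`. As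
`μ_j ≳ j⁴`, the sum over `j` converges uniformly in `n` as soon as the surviving power of `1/μ_j`
exceeds `1/4`, and the remaining freedom in `a` and `b` leaves the integrable singularity
`s^{ε/2-1}`. -/

section SpectralMultiplier

/-- The backward Euler error after `⌊s/τ⌋ + 1` steps of size `τ` for the scalar decay equation
`u' = -μu`: the numerical solution, evaluated with the shift `s + τ` as in `Gnt`, minus the exact
solution at time `s`. -/
def backwardEulerError (τ μ s : ℝ) : ℝ :=
  ((1 + τ * μ) ^ ⌊(s + τ) / τ⌋₊)⁻¹ - exp (-μ * s)

/-- The integral kernel `Σ_{j=1}^{n-1} d_{j-1} φ_{j,n}(x) φ_j(κ_n(y))` of the multiplier `d` in the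
discrete sine basis. The index of `d` is shifted by one, as in the sums defining `Gn` and `Gnt`. -/
def multiplierKernel (n : ℕ) (d : ℕ → ℝ) (x y : ℝ) : ℝ :=
  ∑ j ∈ Finset.range (n - 1), d j * phiIn n (j + 1) x * phiF (j + 1) (kap n y)

lemma Gnt_sub_Gn (n : ℕ) (τ s x y : ℝ) :
    Gnt n τ (s + τ) x y - Gn n s x y =
      multiplierKernel n (fun j => backwardEulerError τ (lamEig (j + 1) n ^ 2) s) x y := by
  rw [Gnt, Gn, multiplierKernel, ← Finset.sum_sub_distrib]
  exact Finset.sum_congr rfl fun j _ => by rw [backwardEulerError]; ring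

lemma DGnt_sub_DGn (n : ℕ) (τ s x y : ℝ) :
    DGnt n τ (s + τ) x y - DGn n s x y =
      multiplierKernel n
        (fun j => lamEig (j + 1) n * backwardEulerError τ (lamEig (j + 1) n ^ 2) s) x y := by
  rw [DGnt, DGn, multiplierKernel, ← Finset.sum_sub_distrib]
  exact Finset.sum_congr rfl fun j _ => by rw [backwardEulerError]; ring

end SpectralMultiplier

section GridIntegral

lemma kap_eq_of_mem_Ioo {n : ℕ} (hn : n ≠ 0) {l : ℕ} {y : ℝ}
    (hy : y ∈ Set.Ioo (π / n * l) (π / n * (l + 1 : ℕ))) : kap n y = π / n * l := by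
  have hh : 0 < π / n := by positivity
  have hfloor : ⌊y / (π / n)⌋ = (l : ℤ) := by
    rw [Int.floor_eq_iff, le_div_iff₀' hh, div_lt_iff₀' hh]
    exact ⟨mod_cast hy.1.le, mod_cast hy.2⟩
  rw [kap, hfloor, Int.cast_natCast]

lemma integral_comp_kap {n : ℕ} (hn : n ≠ 0) (F : ℝ → ℝ) :
    ∫ y in (0 : ℝ)..π, F (kap n y) = π / n * ∑ l ∈ Finset.range n, F (π / n * l) := by
  have hle (l : ℕ) : π / n * l ≤ π / n * (l + 1 : ℕ) := by gcongr; simp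
  have hconst (l : ℕ) : Set.EqOn (fun _ => F (π / n * l)) (fun y => F (kap n y))
      (Set.uIoo (π / n * l) (π / n * (l + 1 : ℕ))) := fun y hy => by
    rw [Set.uIoo_of_le (hle l)] at hy
    simp only [kap_eq_of_mem_Ioo hn hy]
  have hsum := sum_integral_adjacent_intervals (a := fun l : ℕ => π / n * l) (n := n)
    fun l _ => (intervalIntegrable_const (μ := MeasureTheory.volume)).congr_uIoo (hconst l)
  have hπ : π / n * n = π := by field_simp
  rw [hπ, Nat.cast_zero, mul_zero] at hsum
  rw [← hsum, Finset.mul_sum]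
  refine Finset.sum_congr rfl fun l _ => ?_
  rw [← integral_congr_uIoo (hconst l), intervalIntegral.integral_const, smul_eq_mul]
  push_cast
  ring

lemma integral_abs_comp_kap_le_sqrt {n : ℕ} (hn : n ≠ 0) (F : ℝ → ℝ) :
    ∫ y in (0 : ℝ)..π, |F (kap n y)| ≤ √(π * ∫ y in (0 : ℝ)..π, F (kap n y) ^ 2) := by
  rw [integral_comp_kap hn (fun z => |F z|), integral_comp_kap hn (fun z => F z ^ 2)]
  apply Real.le_sqrt_of_sq_le
  have hCS := sq_sum_le_card_mul_sum_sq (s := Finset.range n) (f := fun l : ℕ => |F (π / n * l)|)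
  simp only [sq_abs, Finset.card_range] at hCS
  calc (π / n * ∑ l ∈ Finset.range n, |F (π / n * l)|) ^ 2
      ≤ (π / n) ^ 2 * (n * ∑ l ∈ Finset.range n, F (π / n * l) ^ 2) := by
        rw [mul_pow]; gcongr
    _ = π * (π / n * ∑ l ∈ Finset.range n, F (π / n * l) ^ 2) := by field_simp

end GridIntegral

section DiscreteSineBasis

lemma sum_cos_int_mul_pi_div {n : ℕ} (hn : n ≠ 0) {m : ℤ} (hm : ¬ (2 * n : ℤ) ∣ m) :
    ∑ l ∈ Finset.range n, cos (m * (π / n) * l) = (1 - cos (m * π)) / 2 := by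
  have ha (k : ℤ) : m * (π / n) ≠ k * (2 * π) := fun h => hm ⟨k, by
    field_simp at h
    have hmk : (m : ℝ) = 2 * n * k := by linarith
    exact_mod_cast hmk⟩
  have hsin : sin (m * (π / n) / 2) ≠ 0 := fun h => by
    obtain ⟨k, hk⟩ := Real.sin_eq_zero_iff.1 h
    exact ha k (by linear_combination -2 * hk)
  have hhalf : (n : ℝ) * (m * (π / n)) / 2 = m * π / 2 := by field_simp
  have hshift : ((n : ℝ) - 1) * (m * (π / n)) / 2 = m * π / 2 - m * (π / n) / 2 := by field_simp
  have hsin_mul_cos : sin (m * π / 2) * cos (m * π / 2) = 0 := by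
    have h := sin_two_mul (m * π / 2)
    rw [mul_div_cancel₀ _ two_ne_zero, Real.sin_int_mul_pi] at h
    linarith
  have hcos : cos (m * π) = 1 - 2 * sin (m * π / 2) ^ 2 := by
    have h := sin_sq_eq_half_sub (m * π / 2)
    rw [mul_div_cancel₀ _ two_ne_zero] at h
    linarith
  have h := Real.sum_cos n ha 0
  simp only [add_zero] at h
  rw [h, hhalf, hshift, cos_sub, div_eq_iff hsin, hcos]
  linear_combination cos (m * (π / n) / 2) * hsin_mul_cos

lemma sum_sin_mul_sin {n j k : ℕ} (hj : 0 < j) (hjn : j < n) (hkn : k < n) :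
    ∑ l ∈ Finset.range n, sin (j * (π / n * l)) * sin (k * (π / n * l)) =
      if j = k then (n : ℝ) / 2 else 0 := by
  have hn : n ≠ 0 := by omega
  have hprod (l : ℕ) : sin (j * (π / n * l)) * sin (k * (π / n * l)) =
      (cos (((j - k : ℤ) : ℝ) * (π / n) * l) - cos (((j + k : ℤ) : ℝ) * (π / n) * l)) / 2 := by
    have hsub : ((j - k : ℤ) : ℝ) * (π / n) * l = j * (π / n * l) - k * (π / n * l) := by
      push_cast; ring
    have hadd : ((j + k : ℤ) : ℝ) * (π / n) * l = j * (π / n * l) + k * (π / n * l) := by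
      push_cast; ring
    rw [hsub, hadd, cos_sub, cos_add]
    ring
  have hndvd {m : ℤ} (hm : m ≠ 0) (hmn : |m| < 2 * n) : ¬ (2 * n : ℤ) ∣ m :=
    fun h => hm (Int.eq_zero_of_abs_lt_dvd h hmn)
  have hsum_add := sum_cos_int_mul_pi_div hn (hndvd (m := j + k) (by omega) (by rw [abs_lt]; omega))
  simp_rw [hprod]
  rw [← Finset.sum_div, Finset.sum_sub_distrib, hsum_add]
  split_ifs with hjk
  · subst hjk
    have hcos : cos ((j + j : ℝ) * π) = 1 := by
      rw [← cos_nat_mul_two_pi j]; ring_nf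
    simp [hcos]
  · rw [sum_cos_int_mul_pi_div hn (hndvd (m := j - k) (by omega) (by rw [abs_lt]; omega))]
    push_cast
    rw [sub_mul, add_mul, cos_sub, cos_add, sin_nat_mul_pi]
    ring

lemma sum_phiF_mul_phiF {n j k : ℕ} (hj : 0 < j) (hjn : j < n) (hkn : k < n) :
    ∑ l ∈ Finset.range n, phiF j (π / n * l) * phiF k (π / n * l) =
      if j = k then (n : ℝ) / π else 0 := by
  have hsq : √(2 / π) * √(2 / π) = 2 / π := Real.mul_self_sqrt (by positivity)
  have hprod (l : ℕ) : phiF j (π / n * l) * phiF k (π / n * l) =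
      2 / π * (sin (j * (π / n * l)) * sin (k * (π / n * l))) := by
    rw [phiF, phiF, mul_mul_mul_comm, hsq]
  simp_rw [hprod]
  rw [← Finset.mul_sum, sum_sin_mul_sin hj hjn hkn, mul_ite, mul_zero]
  congr 1
  field_simp

lemma sum_sq_sum_mul_of_orthogonal {ι κ : Type*} [DecidableEq ι] {R : Type*} [CommRing R]
    (s : Finset ι) (t : Finset κ) (e : ι → κ → R) (c : R)
    (he : ∀ i ∈ s, ∀ j ∈ s, ∑ l ∈ t, e i l * e j l = if i = j then c else 0) (a : ι → R) :
    ∑ l ∈ t, (∑ i ∈ s, a i * e i l) ^ 2 = c * ∑ i ∈ s, a i ^ 2 := by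
  calc ∑ l ∈ t, (∑ i ∈ s, a i * e i l) ^ 2
      = ∑ l ∈ t, ∑ i ∈ s, ∑ j ∈ s, a i * a j * (e i l * e j l) := by
        refine Finset.sum_congr rfl fun l _ => ?_
        rw [sq, Finset.sum_mul_sum]
        exact Finset.sum_congr rfl fun i _ => Finset.sum_congr rfl fun j _ => by ring
    _ = ∑ i ∈ s, ∑ j ∈ s, a i * a j * ∑ l ∈ t, e i l * e j l := by
        rw [Finset.sum_comm]
        refine Finset.sum_congr rfl fun i _ => ?_
        rw [Finset.sum_comm]
        simp_rw [Finset.mul_sum]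
    _ = ∑ i ∈ s, c * a i ^ 2 := by
        refine Finset.sum_congr rfl fun i hi => ?_
        rw [Finset.sum_congr rfl fun j hj => by rw [he i hi j hj], Finset.sum_eq_single_of_mem i hi]
        · rw [if_pos rfl]; ring
        · intro j _ hji
          rw [if_neg hji.symm, mul_zero]
    _ = c * ∑ i ∈ s, a i ^ 2 := (Finset.mul_sum ..).symm

lemma abs_phiF_le (j : ℕ) (x : ℝ) : |phiF j x| ≤ √(2 / π) := by
  rw [phiF, abs_mul, abs_of_nonneg (Real.sqrt_nonneg _)]
  exact mul_le_of_le_one_right (Real.sqrt_nonneg _) (abs_sin_le_one _)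

lemma abs_phiIn_le {n : ℕ} (hn : n ≠ 0) (j : ℕ) (x : ℝ) : |phiIn n j x| ≤ √(2 / π) := by
  set w := Int.fract (x / (π / n)) with hw_def
  have hw : (n : ℝ) / π * (x - kap n x) = w := by
    rw [hw_def, kap, ← Int.self_sub_floor (x / (π / n))]; field_simp
  have hconvex : phiIn n j x = (1 - w) * phiF j (kap n x) + w * phiF j (kap n x + π / n) := by
    rw [phiIn, hw]; ring
  have hw0 : 0 ≤ w := Int.fract_nonneg _
  have hw1 : 0 ≤ 1 - w := sub_nonneg.2 (Int.fract_lt_one _).le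
  rw [hconvex]
  calc |(1 - w) * phiF j (kap n x) + w * phiF j (kap n x + π / n)|
      ≤ (1 - w) * |phiF j (kap n x)| + w * |phiF j (kap n x + π / n)| := by
        refine (abs_add_le _ _).trans_eq ?_
        rw [abs_mul, abs_mul, abs_of_nonneg hw0, abs_of_nonneg hw1]
    _ ≤ (1 - w) * √(2 / π) + w * √(2 / π) := by gcongr <;> exact abs_phiF_le ..
    _ = √(2 / π) := by ring

lemma integral_sq_multiplierKernel_le {n : ℕ} (hn : n ≠ 0) (d : ℕ → ℝ) (x : ℝ) :
    ∫ y in (0 : ℝ)..π, multiplierKernel n d x y ^ 2 ≤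
      2 / π * ∑ j ∈ Finset.range (n - 1), d j ^ 2 := by
  have hparseval := sum_sq_sum_mul_of_orthogonal (Finset.range (n - 1)) (Finset.range n)
    (fun j l => phiF (j + 1) (π / n * l)) (n / π)
    (fun j hj k hk => by
      rw [Finset.mem_range] at hj hk
      simpa using sum_phiF_mul_phiF (n := n) j.succ_pos (k := k + 1) (by omega) (by omega))
    (fun j => d j * phiIn n (j + 1) x)
  have hphi (j : ℕ) : phiIn n (j + 1) x ^ 2 ≤ 2 / π := by
    rw [← sq_abs, ← Real.sq_sqrt (show 0 ≤ 2 / π by positivity)]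
    gcongr
    exact abs_phiIn_le hn (j + 1) x
  calc ∫ y in (0 : ℝ)..π, multiplierKernel n d x y ^ 2
      = π / n * (n / π * ∑ j ∈ Finset.range (n - 1), (d j * phiIn n (j + 1) x) ^ 2) := by
        rw [← hparseval]
        exact integral_comp_kap hn fun z =>
          (∑ j ∈ Finset.range (n - 1), d j * phiIn n (j + 1) x * phiF (j + 1) z) ^ 2
    _ = ∑ j ∈ Finset.range (n - 1), phiIn n (j + 1) x ^ 2 * d j ^ 2 := by
        rw [← mul_assoc, div_mul_div_cancel₀ (by positivity), div_self (by positivity), one_mul]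
        exact Finset.sum_congr rfl fun j _ => by ring
    _ ≤ 2 / π * ∑ j ∈ Finset.range (n - 1), d j ^ 2 := by
        rw [Finset.mul_sum]
        gcongr with j
        exact hphi j

lemma integral_abs_multiplierKernel_le {n : ℕ} (hn : n ≠ 0) (d : ℕ → ℝ) (x : ℝ) :
    ∫ y in (0 : ℝ)..π, |multiplierKernel n d x y| ≤
      √(2 * ∑ j ∈ Finset.range (n - 1), d j ^ 2) := by
  refine (integral_abs_comp_kap_le_sqrt hn fun z =>
    ∑ j ∈ Finset.range (n - 1), d j * phiIn n (j + 1) x * phiF (j + 1) z).trans ?_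
  apply Real.sqrt_le_sqrt
  calc π * ∫ y in (0 : ℝ)..π, multiplierKernel n d x y ^ 2
      ≤ π * (2 / π * ∑ j ∈ Finset.range (n - 1), d j ^ 2) := by
        gcongr
        exact integral_sq_multiplierKernel_le hn d x
    _ = 2 * ∑ j ∈ Finset.range (n - 1), d j ^ 2 := by field_simp

end DiscreteSineBasis

section BackwardEuler

lemma sq_mul_sq_le_four_mul_one_add_pow {z : ℝ} (hz : 0 ≤ z) {N : ℕ} (hN : 2 ≤ N) :
    (N : ℝ) ^ 2 * z ^ 2 ≤ 4 * (1 + z) ^ N := by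
  have hN' : (1 : ℝ) ≤ N / 2 := by rw [le_div_iff₀ two_pos]; exact_mod_cast hN
  have hbernoulli := one_add_mul_self_le_rpow_one_add (by linarith : -1 ≤ z) hN'
  have hsq : ((1 + z) ^ ((N : ℝ) / 2)) ^ 2 = (1 + z) ^ N := by
    rw [← rpow_mul_natCast (by linarith), Nat.cast_two, div_mul_cancel₀ _ two_ne_zero,
      rpow_natCast]
  calc (N : ℝ) ^ 2 * z ^ 2 = 4 * (N / 2 * z) ^ 2 := by ring
    _ ≤ 4 * ((1 + z) ^ ((N : ℝ) / 2)) ^ 2 := by gcongr; linarith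
    _ = 4 * (1 + z) ^ N := by rw [hsq]

lemma exp_neg_le_inv_one_add {z : ℝ} (hz : 0 ≤ z) : exp (-z) ≤ (1 + z)⁻¹ := by
  rw [exp_neg]
  gcongr
  linarith [add_one_le_exp z]

lemma inv_one_add_sub_exp_neg_le {z : ℝ} (hz : 0 ≤ z) :
    (1 + z)⁻¹ - exp (-z) ≤ z ^ 2 * (1 + z)⁻¹ := by
  have h : (1 + z)⁻¹ - (1 - z) = z ^ 2 * (1 + z)⁻¹ := by field_simp; ring
  linarith [add_one_le_exp (-z)]

lemma inv_one_add_pow_sub_exp_neg_pow_le {z : ℝ} (hz : 0 ≤ z) {N : ℕ} (hN : 1 ≤ N) :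
    ((1 + z)⁻¹) ^ N - exp (-z) ^ N ≤ 4 / N := by
  have hexp := exp_neg_le_inv_one_add hz
  have hN0 : (0 : ℝ) < N := by exact_mod_cast hN
  rcases hN.eq_or_lt with rfl | hN2
  · have : (1 + z)⁻¹ ≤ 1 := inv_le_one_of_one_le₀ (by linarith)
    rw [pow_one, pow_one, Nat.cast_one, div_one]
    linarith [exp_pos (-z)]
  have hmvt := (le_abs_self _).trans (abs_pow_sub_pow_le (1 + z)⁻¹ (exp (-z)) N)
  rw [abs_of_nonneg (sub_nonneg.2 hexp), abs_of_pos (exp_pos _), abs_of_pos (by positivity),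
    max_eq_left hexp] at hmvt
  calc ((1 + z)⁻¹) ^ N - exp (-z) ^ N
      ≤ z ^ 2 * (1 + z)⁻¹ * N * ((1 + z)⁻¹) ^ (N - 1) := by
        refine hmvt.trans ?_
        gcongr
        exact inv_one_add_sub_exp_neg_le hz
    _ = N * z ^ 2 * ((1 + z)⁻¹ * ((1 + z)⁻¹) ^ (N - 1)) := by ring
    _ = N * z ^ 2 / (1 + z) ^ N := by
        rw [mul_pow_sub_one (by omega), inv_pow, div_eq_mul_inv]
    _ ≤ 4 / N := by
        rw [div_le_div_iff₀ (by positivity) hN0]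
        linarith [sq_mul_sq_le_four_mul_one_add_pow hz hN2]

lemma exp_neg_le_inv {z : ℝ} (hz : 0 < z) : exp (-z) ≤ z⁻¹ := by
  rw [exp_neg]
  gcongr
  linarith [add_one_le_exp z]

lemma exp_neg_mul_sub_exp_neg_mul_le {μ s t τ : ℝ} (hμ : 0 < μ) (hs : 0 < s) (hτ : 0 ≤ τ)
    (ht : t ≤ s + τ) : exp (-(μ * s)) - exp (-(μ * t)) ≤ τ / s := by
  have hfactor : exp (-(μ * t)) = exp (-(μ * s)) * exp (-(μ * (t - s))) := by
    rw [← exp_add]; ring_nf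
  have hlinear : 1 - exp (-(μ * (t - s))) ≤ μ * τ := by
    nlinarith [add_one_le_exp (-(μ * (t - s)))]
  calc exp (-(μ * s)) - exp (-(μ * t))
      = exp (-(μ * s)) * (1 - exp (-(μ * (t - s)))) := by rw [hfactor]; ring
    _ ≤ exp (-(μ * s)) * (μ * τ) := by gcongr
    _ ≤ (μ * s)⁻¹ * (μ * τ) := by
        gcongr
        exact exp_neg_le_inv (by positivity)
    _ = τ / s := by field_simp

variable {τ μ s : ℝ}

lemma exists_floor_add_div_eq (hτ : 0 < τ) (hs : 0 ≤ s) :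
    ∃ N : ℕ, ⌊(s + τ) / τ⌋₊ = N ∧ 1 ≤ N ∧ s ≤ N * τ ∧ N * τ ≤ s + τ := by
  have hle := Nat.floor_le (show 0 ≤ (s + τ) / τ by positivity)
  have hlt := Nat.lt_floor_add_one ((s + τ) / τ)
  rw [le_div_iff₀ hτ] at hle
  rw [div_lt_iff₀ hτ] at hlt
  refine ⟨_, rfl, Nat.le_floor ?_, by linarith, hle⟩
  rw [Nat.cast_one, le_div_iff₀ hτ]
  linarith

lemma abs_backwardEulerError_le_one (hτ : 0 ≤ τ) (hμ : 0 ≤ μ) (hs : 0 ≤ s) :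
    |backwardEulerError τ μ s| ≤ 1 :=
  abs_sub_le_of_nonneg_of_le (by positivity)
    (inv_le_one_of_one_le₀ (one_le_pow₀ (le_add_of_nonneg_right (by positivity))))
    (exp_pos _).le (exp_le_one_iff.2 (by nlinarith))

lemma abs_backwardEulerError_le_inv (hτ : 0 < τ) (hμ : 0 < μ) (hs : 0 < s) :
    |backwardEulerError τ μ s| ≤ (μ * s)⁻¹ := by
  obtain ⟨N, hfloor, -, hsN, -⟩ := exists_floor_add_div_eq hτ hs.le
  have hbernoulli := one_add_mul_le_pow (a := τ * μ) (by nlinarith [mul_pos hτ hμ]) N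
  rw [backwardEulerError, hfloor, neg_mul]
  refine abs_sub_le_of_nonneg_of_le (by positivity) ?_ (exp_pos _).le
    (exp_neg_le_inv (by positivity))
  gcongr
  nlinarith

lemma abs_backwardEulerError_le_four_mul_div (hτ : 0 < τ) (hμ : 0 < μ) (hs : 0 < s) :
    |backwardEulerError τ μ s| ≤ 4 * τ / s := by
  obtain ⟨N, hfloor, hN, hsN, hNs⟩ := exists_floor_add_div_eq hτ hs.le
  have hz : 0 ≤ τ * μ := by positivity
  have hN0 : (0 : ℝ) < N := by exact_mod_cast hN
  have hexp_pow : exp (-(τ * μ)) ^ N = exp (-(μ * (N * τ))) := by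
    rw [← exp_nat_mul]; ring_nf
  have hmono : exp (-(μ * (N * τ))) ≤ exp (-(μ * s)) := by gcongr
  have hconsistency := inv_one_add_pow_sub_exp_neg_pow_le hz hN
  have hstep : 4 / N ≤ 4 * τ / s := by
    rw [div_le_div_iff₀ hN0 hs]; linarith
  have hstable := pow_le_pow_left₀ (exp_pos _).le (exp_neg_le_inv_one_add hz) N
  have hshift := exp_neg_mul_sub_exp_neg_mul_le hμ hs hτ.le hNs
  have hτs : 0 < τ / s := by positivity
  rw [hexp_pow] at hconsistency hstable
  rw [backwardEulerError, hfloor, neg_mul, ← inv_pow, abs_le]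
  constructor
  · linarith [mul_div_assoc 4 τ s]
  · linarith

lemma rpow_le_rpow_mul_rpow {e u v a b q : ℝ} (he : 0 ≤ e) (he1 : e ≤ 1) (heu : e ≤ u)
    (hev : e ≤ v) (ha : 0 ≤ a) (hb : 0 ≤ b) (hab : a + b ≤ q) : e ^ q ≤ u ^ a * v ^ b :=
  calc e ^ q ≤ e ^ (a + b) := rpow_le_rpow_of_exponent_ge' he he1 (add_nonneg ha hb) hab
    _ = e ^ a * e ^ b := rpow_add_of_nonneg he ha hb
    _ ≤ u ^ a * v ^ b := by
        gcongr
        exact rpow_nonneg (he.trans heu) a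

lemma backwardEulerError_sq_le {a b : ℝ} (hτ : 0 < τ) (hμ : 0 < μ) (hs : 0 < s) (ha : 0 ≤ a)
    (hb : 0 ≤ b) (hab : a + b ≤ 2) :
    backwardEulerError τ μ s ^ 2 ≤ 4 ^ a * τ ^ a * s ^ (-(a + b)) * μ ^ (-b) := by
  have hinterp := rpow_le_rpow_mul_rpow (abs_nonneg _)
    (abs_backwardEulerError_le_one hτ.le hμ.le hs.le)
    (abs_backwardEulerError_le_four_mul_div hτ hμ hs) (abs_backwardEulerError_le_inv hτ hμ hs)
    ha hb hab
  rw [rpow_two, sq_abs] at hinterp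
  refine hinterp.trans_eq ?_
  rw [div_rpow (by positivity) hs.le, mul_rpow (by positivity) hτ.le, inv_rpow (by positivity),
    mul_rpow hμ.le hs.le, rpow_neg hs.le, rpow_neg hμ.le, rpow_add hs]
  field_simp

end BackwardEuler

section SpectralSums

lemma two_mul_div_pi_pow_four_le_lamEig_sq {j n : ℕ} (hn : n ≠ 0) (hj : j ≤ n) :
    (2 * j / π) ^ 4 ≤ lamEig j n ^ 2 := by
  have hj' : (j : ℝ) ≤ n := by exact_mod_cast hj
  have hsin : (j : ℝ) / n ≤ sin (j * π / (2 * n)) := by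
    have hangle : (j : ℝ) * π / (2 * n) ≤ π / 2 := by
      rw [div_le_div_iff₀ (by positivity) two_pos]
      nlinarith [pi_pos]
    calc (j : ℝ) / n = 2 / π * (j * π / (2 * n)) := by field_simp
      _ ≤ sin (j * π / (2 * n)) := mul_le_sin (by positivity) hangle
  calc (2 * j / π) ^ 4 = (4 * (n : ℝ) ^ 2 / π ^ 2 * ((j : ℝ) / n) ^ 2) ^ 2 := by
        field_simp; ring
    _ ≤ (4 * (n : ℝ) ^ 2 / π ^ 2 * sin (j * π / (2 * n)) ^ 2) ^ 2 := by gcongr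
    _ = lamEig j n ^ 2 := by rw [lamEig]; ring

lemma lamEig_sq_pos {j n : ℕ} (hj : 0 < j) (hjn : j ≤ n) : 0 < lamEig j n ^ 2 :=
  lt_of_lt_of_le (by positivity) (two_mul_div_pi_pow_four_le_lamEig_sq (by omega) hjn)

lemma exists_sum_lamEig_sq_rpow_neg_le {p : ℝ} (hp : 1 / 4 < p) :
    ∃ K > 0, ∀ n : ℕ, ∑ j ∈ Finset.range (n - 1), (lamEig (j + 1) n ^ 2) ^ (-p) ≤ K := by
  have hsummable : Summable fun j : ℕ => ((2 * ((j + 1 : ℕ) : ℝ) / π) ^ 4) ^ (-p) := by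
    have h := (summable_nat_add_iff 1).2 (Real.summable_nat_rpow.2 (show 4 * -p < -1 by linarith))
    refine (h.mul_left ((2 / π) ^ (4 * -p))).congr fun j => ?_
    rw [← mul_rpow (by positivity) (by positivity), ← rpow_natCast_mul (by positivity)]
    push_cast
    ring_nf
  refine ⟨_, hsummable.tsum_pos (fun _ => by positivity) 0 (by positivity), fun n => ?_⟩
  refine le_trans (Finset.sum_le_sum fun j hj => ?_)
    (hsummable.sum_le_tsum (Finset.range (n - 1)) fun _ _ => by positivity)
  rw [Finset.mem_range] at hj
  exact rpow_le_rpow_of_nonpos (by positivity)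
    (two_mul_div_pi_pow_four_le_lamEig_sq (by omega) (by omega)) (by linarith)

lemma exists_sum_rpow_mul_backwardEulerError_sq_le {a p r : ℝ} (ha : 0 ≤ a) (hp : 1 / 4 < p)
    (hpr : 0 ≤ p + r) (hapr : a + p + r ≤ 2) :
    ∃ K > 0, ∀ n : ℕ, ∀ τ > 0, ∀ s > 0,
      ∑ j ∈ Finset.range (n - 1), (lamEig (j + 1) n ^ 2) ^ r *
        backwardEulerError τ (lamEig (j + 1) n ^ 2) s ^ 2 ≤ K * s ^ (-(a + p + r)) * τ ^ a := by
  obtain ⟨K, hK, hsum⟩ := exists_sum_lamEig_sq_rpow_neg_le hp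
  refine ⟨4 ^ a * K, by positivity, fun n τ hτ s hs => ?_⟩
  calc ∑ j ∈ Finset.range (n - 1), (lamEig (j + 1) n ^ 2) ^ r *
        backwardEulerError τ (lamEig (j + 1) n ^ 2) s ^ 2
      ≤ ∑ j ∈ Finset.range (n - 1),
          4 ^ a * τ ^ a * s ^ (-(a + p + r)) * (lamEig (j + 1) n ^ 2) ^ (-p) := by
        refine Finset.sum_le_sum fun j hj => ?_
        rw [Finset.mem_range] at hj
        have hμ : 0 < lamEig (j + 1) n ^ 2 := lamEig_sq_pos j.succ_pos (by omega)
        have herror := backwardEulerError_sq_le hτ hμ hs ha hpr (by linarith)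
        refine (mul_le_mul_of_nonneg_left herror (by positivity)).trans_eq ?_
        rw [show -p = r + -(p + r) by ring, rpow_add hμ, ← add_assoc]
        ring
    _ = 4 ^ a * τ ^ a * s ^ (-(a + p + r)) *
          ∑ j ∈ Finset.range (n - 1), (lamEig (j + 1) n ^ 2) ^ (-p) := (Finset.mul_sum ..).symm
    _ ≤ 4 ^ a * τ ^ a * s ^ (-(a + p + r)) * K := by gcongr; exact hsum n
    _ = 4 ^ a * K * s ^ (-(a + p + r)) * τ ^ a := by ring

end SpectralSums

section TimeIntegration

lemma integral_le_of_le_mul_rpow {f : ℝ → ℝ} {D δ t : ℝ} (hδ : 0 < δ) (ht : 0 ≤ t)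
    (hf0 : ∀ s > 0, 0 ≤ f s) (hf : ∀ s > 0, f s ≤ D * s ^ (δ - 1)) :
    ∫ s in (0 : ℝ)..t, f s ≤ D * (t ^ δ / δ) := by
  have hint : IntervalIntegrable (fun s : ℝ => D * s ^ (δ - 1)) MeasureTheory.volume 0 t :=
    (intervalIntegrable_rpow' (by linarith)).const_mul D
  calc ∫ s in (0 : ℝ)..t, f s ≤ ∫ s in (0 : ℝ)..t, D * s ^ (δ - 1) :=
        (le_abs_self _).trans <| norm_integral_le_of_norm_le ht
          (.of_forall fun s hs => (Real.norm_of_nonneg (hf0 s hs.1)).trans_le (hf s hs.1)) hint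
    _ = D * (t ^ δ / δ) := by
        rw [intervalIntegral.integral_const_mul, integral_rpow (.inl (by linarith)),
          sub_add_cancel, zero_rpow hδ.ne', sub_zero]

lemma exists_integral_sq_Gnt_sub_Gn_le {ε : ℝ} (hε : 0 < ε) (hε' : ε ≤ 3 / 4) :
    ∃ C > 0, ∀ n : ℕ, n ≠ 0 → ∀ τ > 0, ∀ t ≥ 0, ∀ x : ℝ,
      ∫ s in (0 : ℝ)..t, ∫ y in (0 : ℝ)..π, (Gnt n τ (s + τ) x y - Gn n s x y) ^ 2 ≤
        C * t ^ (ε / 2) * τ ^ (3 / 4 - ε) := by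
  obtain ⟨K, hK, hsum⟩ := exists_sum_rpow_mul_backwardEulerError_sq_le (a := 3 / 4 - ε)
    (p := 1 / 4 + ε / 2) (r := 0) (by linarith) (by linarith) (by linarith) (by linarith)
  refine ⟨2 / π * K / (ε / 2), by positivity, fun n hn τ hτ t ht x => ?_⟩
  have hbound : ∀ s > 0, ∫ y in (0 : ℝ)..π, (Gnt n τ (s + τ) x y - Gn n s x y) ^ 2 ≤
      2 / π * K * τ ^ (3 / 4 - ε) * s ^ (ε / 2 - 1) := fun s hs => by
    simp_rw [Gnt_sub_Gn]
    refine (integral_sq_multiplierKernel_le hn _ x).trans ?_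
    have h := hsum n τ hτ s hs
    simp only [rpow_zero, one_mul] at h
    rw [show -(3 / 4 - ε + (1 / 4 + ε / 2) + 0) = ε / 2 - 1 by ring] at h
    calc _ ≤ 2 / π * (K * s ^ (ε / 2 - 1) * τ ^ (3 / 4 - ε)) := by gcongr
      _ = _ := by ring
  refine (integral_le_of_le_mul_rpow (half_pos hε) ht
    (fun s _ => intervalIntegral.integral_nonneg pi_pos.le fun y _ => sq_nonneg _)
    hbound).trans_eq ?_
  ring

lemma exists_integral_abs_DGnt_sub_DGn_le {ε : ℝ} (hε : 0 < ε) (hε' : ε ≤ 3 / 8) :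
    ∃ C > 0, ∀ n : ℕ, n ≠ 0 → ∀ τ > 0, ∀ t ≥ 0, ∀ x : ℝ,
      ∫ s in (0 : ℝ)..t, ∫ y in (0 : ℝ)..π, |DGnt n τ (s + τ) x y - DGn n s x y| ≤
        C * t ^ (ε / 2) * τ ^ (3 / 8 - ε) := by
  obtain ⟨K, hK, hsum⟩ := exists_sum_rpow_mul_backwardEulerError_sq_le (a := 2 * (3 / 8 - ε))
    (p := 1 / 4 + ε) (r := 1) (by linarith) (by linarith) (by linarith) (by linarith)
  refine ⟨√(2 * K) / (ε / 2), by positivity, fun n hn τ hτ t ht x => ?_⟩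
  have hbound : ∀ s > 0, ∫ y in (0 : ℝ)..π, |DGnt n τ (s + τ) x y - DGn n s x y| ≤
      √(2 * K) * τ ^ (3 / 8 - ε) * s ^ (ε / 2 - 1) := fun s hs => by
    simp_rw [DGnt_sub_DGn]
    refine (integral_abs_multiplierKernel_le hn _ x).trans ?_
    have h := hsum n τ hτ s hs
    simp only [rpow_one, ← mul_pow] at h
    rw [show -(2 * (3 / 8 - ε) + (1 / 4 + ε) + 1) = 2 * (ε / 2 - 1) by ring] at h
    have hsq {u : ℝ} (hu : 0 < u) (v : ℝ) : u ^ (2 * v) = (u ^ v) ^ 2 := by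
      rw [mul_comm, rpow_mul hu.le, rpow_two]
    rw [hsq hs, hsq hτ] at h
    calc _ ≤ √(2 * (K * (s ^ (ε / 2 - 1)) ^ 2 * (τ ^ (3 / 8 - ε)) ^ 2)) := by gcongr
      _ = √(2 * K * (τ ^ (3 / 8 - ε) * s ^ (ε / 2 - 1)) ^ 2) := by ring_nf
      _ = _ := by rw [Real.sqrt_mul (by positivity), Real.sqrt_sq (by positivity), mul_assoc]
  refine (integral_le_of_le_mul_rpow (half_pos hε) ht
    (fun s _ => intervalIntegral.integral_nonneg pi_pos.le fun y _ => abs_nonneg _)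
    hbound).trans_eq ?_
  ring

end TimeIntegration

theorem stmt17_general {ε : ℝ} (hε : ε ∈ Set.Ioc (0 : ℝ) (3 / 8)) :
    ∃ C > 0, ∀ n : ℕ, n ≠ 0 → ∀ τ > 0, ∀ t ≥ 0, ∀ x : ℝ,
      (∫ s in (0 : ℝ)..t, ∫ y in (0 : ℝ)..π, (Gnt n τ (s + τ) x y - Gn n s x y) ^ 2 ≤
          C * t ^ (ε / 2) * τ ^ (3 / 4 - ε)) ∧
        ∫ s in (0 : ℝ)..t, ∫ y in (0 : ℝ)..π, |DGnt n τ (s + τ) x y - DGn n s x y| ≤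
          C * t ^ (ε / 2) * τ ^ (3 / 8 - ε) := by
  obtain ⟨C₁, hC₁, hG⟩ := exists_integral_sq_Gnt_sub_Gn_le hε.1 (by linarith [hε.2])
  obtain ⟨C₂, hC₂, hDG⟩ := exists_integral_abs_DGnt_sub_DGn_le hε.1 hε.2
  refine ⟨C₁ + C₂, by positivity, fun n hn τ hτ t ht x => ⟨?_, ?_⟩⟩
  · exact (hG n hn τ hτ t ht x).trans (by gcongr; linarith)
  · exact (hDG n hn τ hτ t ht x).trans (by gcongr; linarith)

/-- For every `T > 0` and `ε ∈ (0, 3/8)` there is `C = C(T,ε) > 0`, independent of `n` and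
`m`, such that for all integers `n ≥ 2`, `m ≥ 1`, with `τ = T/m` and `t_i = iτ`, for all
`x ∈ (0,π)` and `i ∈ {1,…,m}`:
`∫₀^{t_i}∫₀^π |G^{n,τ}_{s+τ}(x,y) - G^n_s(x,y)|² dy ds ≤ C τ^{3/4-ε}` and
`∫₀^{t_i}∫₀^π |Δ_nG^{n,τ}_{s+τ}(x,y) - Δ_nG^n_s(x,y)| dy ds ≤ C τ^{3/8-ε}`. -/
theorem stmt17 (T ε : ℝ) (hT : 0 < T) (hε : ε ∈ Set.Ioo (0 : ℝ) (3 / 8)) :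
    ∃ C : ℝ, 0 < C ∧ ∀ n : ℕ, 2 ≤ n → ∀ m : ℕ, 1 ≤ m →
      ∀ x ∈ Set.Ioo 0 Real.pi, ∀ i : ℕ, 1 ≤ i → i ≤ m →
        ((∫ s in (0:ℝ)..((i : ℝ) * (T / m)), ∫ y in (0:ℝ)..Real.pi,
              (Gnt n (T / m) (s + T / m) x y - Gn n s x y) ^ 2)
            ≤ C * (T / m) ^ ((3 : ℝ) / 4 - ε))
        ∧ ((∫ s in (0:ℝ)..((i : ℝ) * (T / m)), ∫ y in (0:ℝ)..Real.pi,
              |DGnt n (T / m) (s + T / m) x y - DGn n s x y|)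
            ≤ C * (T / m) ^ ((3 : ℝ) / 8 - ε)) := by
  obtain ⟨C, hC, h⟩ := stmt17_general (Set.Ioo_subset_Ioc_self hε)
  refine ⟨C * T ^ (ε / 2), by positivity, fun n hn m hm x _ i _ him => ?_⟩
  have hε2 : 0 ≤ ε / 2 := (half_pos hε.1).le
  have hiT : i * (T / m) ≤ T := mul_div_left_comm (i : ℝ) T m ▸
    mul_le_of_le_one_right hT.le (div_le_one_of_le₀ (by exact_mod_cast him) (by positivity))
  exact (h n (by omega) (T / m) (by positivity) (i * (T / m)) (by positivity) x).imp
    (·.trans (by gcongr)) (·.trans (by gcongr))
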